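/- Assume dom f ≠ ∅ and P = ℝⁿ × ℝˢ. Then the multifunction C₁ is closed with respect to the topology of weak convergence: for any sequences {μ_l} of Borel probability measures on ℝˢ and {x_l} ⊆ ℝⁿ with μ_l → μ weakly, x_l → x, and x_l ∈ C₁(μ_l) for all l ∈ ℕ, it holds that x ∈ C₁(μ). -/

import Mathlib

open MeasureTheory Matrix Set Topology Filter
open scoped ENNReal NNReal

noncomputable section

/-- Feasible set of the lower level problem: `{ y | A y ≤ T x + z }`. -/
def LowerFeas {n m s : ℕ} (A : Matrix (Fin s) (Fin m) ℝ) (T : Matrix (Fin s) (Fin n) ℝ)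
    (x : Fin n → ℝ) (z : Fin s → ℝ) : Set (Fin m → ℝ) :=
  {y | A.mulVec y ≤ T.mulVec x + z}

/-- Lower level optimal solution set `Ψ(x,z) = Argmin { dᵀy | A y ≤ T x + z }`. -/
def Psi {n m s : ℕ} (d : Fin m → ℝ) (A : Matrix (Fin s) (Fin m) ℝ)
    (T : Matrix (Fin s) (Fin n) ℝ) (x : Fin n → ℝ) (z : Fin s → ℝ) : Set (Fin m → ℝ) :=
  {y | y ∈ LowerFeas A T x z ∧ ∀ y' ∈ LowerFeas A T x z, d ⬝ᵥ y ≤ d ⬝ᵥ y'}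

/-- `f(x,z) = cᵀx + inf { qᵀ y | y ∈ Ψ(x,z) }` with values in `ℝ ∪ {±∞}`
(the infimum over the empty set being `+∞`). -/
def fE {n m s : ℕ} (c : Fin n → ℝ) (q d : Fin m → ℝ) (A : Matrix (Fin s) (Fin m) ℝ)
    (T : Matrix (Fin s) (Fin n) ℝ) (x : Fin n → ℝ) (z : Fin s → ℝ) : EReal :=
  ((c ⬝ᵥ x : ℝ) : EReal) + sInf ((fun y => ((q ⬝ᵥ y : ℝ) : EReal)) '' Psi d A T x z)

/-- `P = { (x,z) | ∃ y, A y ≤ T x + z }`. -/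
def Pfeas {n m s : ℕ} (A : Matrix (Fin s) (Fin m) ℝ) (T : Matrix (Fin s) (Fin n) ℝ) :
    Set ((Fin n → ℝ) × (Fin s → ℝ)) :=
  {p | (LowerFeas A T p.1 p.2).Nonempty}

/-- `dom f = { (x,z) | f(x,z) ∈ ℝ }`. -/
def domf {n m s : ℕ} (c : Fin n → ℝ) (q d : Fin m → ℝ) (A : Matrix (Fin s) (Fin m) ℝ)
    (T : Matrix (Fin s) (Fin n) ℝ) : Set ((Fin n → ℝ) × (Fin s → ℝ)) :=
  {p | fE c q d A T p.1 p.2 ≠ ⊤ ∧ fE c q d A T p.1 p.2 ≠ ⊥}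

/-- Topological support of a Borel measure. -/
def msupport {s : ℕ} (μ : Measure (Fin s → ℝ)) : Set (Fin s → ℝ) :=
  {z | ∀ U : Set (Fin s → ℝ), IsOpen U → z ∈ U → μ U ≠ 0}

/-- `P_Z = { x | (x,z) ∈ P for all z ∈ supp μ_Z }`. -/
def PZSet {n m s : ℕ} (A : Matrix (Fin s) (Fin m) ℝ) (T : Matrix (Fin s) (Fin n) ℝ)
    (μZ : Measure (Fin s → ℝ)) : Set (Fin n → ℝ) :=
  {x | ∀ z ∈ msupport μZ, (x, z) ∈ Pfeas A T}


/-- A polyhedron: solution set of finitely many linear inequalities. -/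
def IsPolyhedron {n : ℕ} (X : Set (Fin n → ℝ)) : Prop :=
  ∃ (k : ℕ) (B : Matrix (Fin k) (Fin n) ℝ) (b : Fin k → ℝ), X = {x | B.mulVec x ≤ b}

/-- An atomless probability space: every set of positive measure has a measurable
subset of strictly smaller positive measure. -/
def AtomlessSpace {Ω : Type*} [MeasurableSpace Ω] (μ : Measure Ω) : Prop :=
  ∀ S : Set Ω, MeasurableSet S → 0 < μ S →
    ∃ B ⊆ S, MeasurableSet B ∧ 0 < μ B ∧ μ B < μ S

/-- A set of Borel probability measures is locally uniformly `‖·‖^p`-integrating if around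
every member there is a weakly open neighbourhood on which the `p`-th moment tails vanish
uniformly (the limit as `a → ∞` of the antitone tail suprema being their infimum). -/
def LocUnifIntegrating {s : ℕ} (pr : ℝ) (M : Set (ProbabilityMeasure (Fin s → ℝ))) : Prop :=
  ∀ μ ∈ M, ∀ ε : ℝ, 0 < ε →
    ∃ N : Set (ProbabilityMeasure (Fin s → ℝ)), IsOpen N ∧ μ ∈ N ∧
      ⨅ a : ℝ, ⨆ ν ∈ M ∩ N,
        ∫⁻ z in {z : Fin s → ℝ | a ≤ ‖z‖}, ENNReal.ofReal (‖z‖ ^ pr)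
          ∂(ν : Measure (Fin s → ℝ)) ≤ ENNReal.ofReal ε

/-- Feasible set under first-order stochastic dominance constraints. -/
def C1 {n m s : ℕ} (c : Fin n → ℝ) (q d : Fin m → ℝ) (A : Matrix (Fin s) (Fin m) ℝ)
    (T : Matrix (Fin s) (Fin n) ℝ) (X : Set (Fin n → ℝ)) (ν : Measure ℝ)
    (μ : ProbabilityMeasure (Fin s → ℝ)) : Set (Fin n → ℝ) :=
  {x ∈ X | ∀ β : ℝ,
    ν (Set.Iic β) ≤ (μ : Measure (Fin s → ℝ)) {z | fE c q d A T x z ≤ (β : EReal)}}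

/-- Feasible set under second-order stochastic dominance constraints. -/
def C2 {n m s : ℕ} (c : Fin n → ℝ) (q d : Fin m → ℝ) (A : Matrix (Fin s) (Fin m) ℝ)
    (T : Matrix (Fin s) (Fin n) ℝ) (X : Set (Fin n → ℝ)) (ν : Measure ℝ)
    (μ : ProbabilityMeasure (Fin s → ℝ)) : Set (Fin n → ℝ) :=
  {x ∈ X | ∀ η : ℝ,
    ∫ z, max ((fE c q d A T x z).toReal - η) 0 ∂(μ : Measure (Fin s → ℝ))
      ≤ ∫ b, max (b - η) 0 ∂ν}

/-!
A feasible point `y` of the lower level problem is optimal exactly when its active constraints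
forbid every descent direction, so the graph of `Psi` is a finite union of polyhedra. Projections
of polyhedra are closed (Fourier–Motzkin elimination), hence the infimum defining `f` is attained
and the sublevel sets of `f` are closed.

For a closed set `F` of pairs `(x, z)`, the mass `μ {z | (x, z) ∈ F}` is `(δ_x ⊗ μ) F`. Since
`δ_x ⊗ μ` depends weakly continuously on `(x, μ)`, the portmanteau theorem makes this mass upper
semicontinuous; applying this to the sublevel sets of `f` gives the closed graph of `C1`.
-/

section FourierMotzkin

lemma exists_mem_upperBounds_inter_lowerBounds {α : Type*} [LinearOrder α] {s t : Set α}
    (hs : BddAbove s) (ht : t.Finite) (hst : ∀ a ∈ s, ∀ b ∈ t, a ≤ b) :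
    (upperBounds s ∩ lowerBounds t).Nonempty := by
  obtain rfl | htne := t.eq_empty_or_nonempty
  · rwa [lowerBounds_empty, inter_univ]
  · obtain ⟨b, hb, hmin⟩ := exists_min_image t id ht htne
    exact ⟨b, fun a ha => hst a ha b hb, hmin⟩

variable {𝕜 ι : Type*} [Field 𝕜] [LinearOrder 𝕜]

/-- The Fourier–Motzkin elimination matrix of a column `a` of coefficients. Its rows are the
nonnegative combinations of constraints that annihilate `a`: a constraint with zero coefficient
is kept, and each pair of constraints with coefficients of opposite signs is combined. -/
def fourierMotzkin [DecidableEq ι] (a : ι → 𝕜) :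
    Matrix ({i // a i = 0} ⊕ {i // 0 < a i} × {j // a j < 0}) ι 𝕜 :=
  Sum.elim (fun i => Pi.single i.1 1)
    (fun p => Pi.single p.2.1 (a p.1) - Pi.single p.1.1 (a p.2))

variable [Fintype ι] [DecidableEq ι]

lemma fourierMotzkin_mulVec (a r : ι → 𝕜) :
    fourierMotzkin a *ᵥ r =
      Sum.elim (fun i => r i.1) (fun p => a p.1 * r p.2 - a p.2 * r p.1) := by
  ext (i | p)
  · exact single_one_dotProduct _ _
  · exact (sub_dotProduct _ _ _).trans (by simp only [single_dotProduct, Sum.elim_inr])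

variable [IsStrictOrderedRing 𝕜]

lemma fourierMotzkin_mulVec_nonneg_iff (a r : ι → 𝕜) :
    0 ≤ fourierMotzkin a *ᵥ r ↔ (∀ i, a i = 0 → 0 ≤ r i) ∧
      ∀ i j, 0 < a i → a j < 0 → a j * r i ≤ a i * r j := by
  simp only [fourierMotzkin_mulVec, Pi.le_def, Sum.forall, Sum.elim_inl, Sum.elim_inr,
    Pi.zero_apply, Subtype.forall, Prod.forall, sub_nonneg]
  grind

lemma exists_smul_le_iff_fourierMotzkin_nonneg (a r : ι → 𝕜) :
    (∃ t : 𝕜, t • a ≤ r) ↔ 0 ≤ fourierMotzkin a *ᵥ r := by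
  rw [fourierMotzkin_mulVec_nonneg_iff]
  constructor
  · rintro ⟨t, ht⟩
    refine ⟨fun i hi => by simpa [hi] using ht i, fun i j hi hj => ?_⟩
    calc a j * r i ≤ a j * (t * a i) := mul_le_mul_of_nonpos_left (ht i) hj.le
      _ = a i * (t * a j) := by ring
      _ ≤ a i * r j := mul_le_mul_of_nonneg_left (ht j) hi.le
  · rintro ⟨hzero, hpair⟩
    obtain ⟨t, hlower, hupper⟩ := exists_mem_upperBounds_inter_lowerBounds
      (s := (fun j => r j / a j) '' {j | a j < 0}) (t := (fun i => r i / a i) '' {i | 0 < a i})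
      (toFinite _).bddAbove (toFinite _) (by
        rintro _ ⟨j, hj, rfl⟩ _ ⟨i, hi, rfl⟩
        rw [div_le_iff_of_neg' hj, ← mul_div_assoc, div_le_iff₀' hi]
        exact hpair i j hi hj)
    refine ⟨t, fun i => ?_⟩
    obtain hi | hi | hi := lt_trichotomy (a i) 0
    · exact (div_le_iff_of_neg hi).1 (hlower (mem_image_of_mem _ hi))
    · simpa [hi] using hzero i hi
    · exact (le_div_iff₀ hi).1 (hupper (mem_image_of_mem _ hi))

lemma exists_mulVec_le_iff_fourierMotzkin {m : ℕ} (M : Matrix ι (Fin (m + 1)) 𝕜) (w : ι → 𝕜) :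
    (∃ y, M *ᵥ y ≤ w) ↔ ∃ y, (fourierMotzkin (M.col 0) * M.submatrix id Fin.succ) *ᵥ y ≤
      fourierMotzkin (M.col 0) *ᵥ w := by
  have mulVec_finCons (t : 𝕜) (y : Fin m → 𝕜) :
      M *ᵥ Fin.cons t y = t • M.col 0 + M.submatrix id Fin.succ *ᵥ y := by
    ext i
    simp [mulVec, dotProduct, Fin.sum_univ_succ, mul_comm]
  simp only [Fin.exists_fin_succ_pi, mulVec_finCons, ← le_sub_iff_add_le]
  rw [exists_comm]
  simp only [exists_smul_le_iff_fourierMotzkin_nonneg, mulVec_sub, mulVec_mulVec, sub_nonneg]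

end FourierMotzkin

section ProjectedPolyhedron

variable {𝕜 ι : Type*} [Field 𝕜] [LinearOrder 𝕜] [IsStrictOrderedRing 𝕜] [TopologicalSpace 𝕜]
  [OrderTopology 𝕜] [Finite ι] {m : ℕ}

theorem isClosed_setOfPred_exists_mulVec_le (M : Matrix ι (Fin m) 𝕜) :
    IsClosed {w : ι → 𝕜 | ∃ y, M *ᵥ y ≤ w} := by
  classical
  induction m generalizing ι with
  | zero =>
    simp only [Fin.exists_fin_zero_pi, mulVec_empty]
    exact isClosed_Ici
  | succ m ih =>
    have := Fintype.ofFinite ι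
    simp only [exists_mulVec_le_iff_fourierMotzkin M]
    exact (ih _).preimage (continuous_const.matrix_mulVec continuous_id)

lemma isClosed_setOfPred_exists_tight_dotProduct_le (q : Fin m → 𝕜) (A : Matrix ι (Fin m) 𝕜)
    (I : Set ι) :
    IsClosed {p : (ι → 𝕜) × 𝕜 |
      ∃ y, (A *ᵥ y ≤ p.1 ∧ ∀ i ∈ I, p.1 i ≤ (A *ᵥ y) i) ∧ q ⬝ᵥ y ≤ p.2} := by
  let system : Matrix (ι ⊕ I ⊕ Unit) (Fin m) 𝕜 :=
    fromRows A (fromRows (-A.submatrix (↑) id) (replicateRow Unit q))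
  let rhs (p : (ι → 𝕜) × 𝕜) : ι ⊕ I ⊕ Unit → 𝕜 :=
    Sum.elim p.1 (Sum.elim (fun i => -p.1 i) fun _ => p.2)
  have system_le_iff (p : (ι → 𝕜) × 𝕜) (y : Fin m → 𝕜) : system *ᵥ y ≤ rhs p ↔
      (A *ᵥ y ≤ p.1 ∧ ∀ i ∈ I, p.1 i ≤ (A *ᵥ y) i) ∧ q ⬝ᵥ y ≤ p.2 := by
    simp [system, rhs, fromRows_mulVec, neg_mulVec, Pi.le_def, and_assoc, mulVec]
  have rhs_continuous : Continuous rhs := by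
    refine continuous_pi ?_
    rintro (i | i | _) <;> simp only [rhs, Sum.elim_inl, Sum.elim_inr] <;> fun_prop
  simpa only [preimage_ofPred_eq, system_le_iff] using
    (isClosed_setOfPred_exists_mulVec_le system).preimage rhs_continuous

end ProjectedPolyhedron

section LowerLevel

variable {n m s : ℕ} {c : Fin n → ℝ} {q d : Fin m → ℝ} {A : Matrix (Fin s) (Fin m) ℝ}
  {T : Matrix (Fin s) (Fin n) ℝ} {x : Fin n → ℝ} {z : Fin s → ℝ} {y : Fin m → ℝ}

/-- A set `I` of constraints certifies optimality when every direction that decreases the objective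
`d` increases some constraint in `I`; a feasible point at which all constraints in `I` are active
is then optimal. Stated through directions rather than multipliers so that Farkas' lemma (by which
`-d` lies in the cone of the rows in `I`) is not needed. -/
def IsOptimalityCertificate {ι : Type*} (d : Fin m → ℝ) (A : Matrix ι (Fin m) ℝ)
    (I : Set ι) : Prop :=
  ∀ v, (∀ i ∈ I, (A *ᵥ v) i ≤ 0) → 0 ≤ d ⬝ᵥ v

lemma isOptimalityCertificate_active (hy : y ∈ Psi d A T x z) :
    IsOptimalityCertificate d A {i | (T *ᵥ x + z) i ≤ (A *ᵥ y) i} := by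
  obtain ⟨hfeas, hmin⟩ := hy
  intro v hv
  have feasible_step : ∀ᶠ t in 𝓝[>] (0 : ℝ), A *ᵥ (y + t • v) ≤ T *ᵥ x + z := by
    refine eventually_all.2 fun i => ?_
    simp only [mulVec_add, mulVec_smul, Pi.add_apply (A *ᵥ y), Pi.smul_apply, smul_eq_mul]
    by_cases hi : (T *ᵥ x + z) i ≤ (A *ᵥ y) i
    · filter_upwards [self_mem_nhdsWithin] with t ht
      exact add_le_of_le_of_nonpos (hfeas i) (mul_nonpos_of_nonneg_of_nonpos ht.le (hv i hi))
    · have hcont : Tendsto (fun t => (A *ᵥ y) i + t * (A *ᵥ v) i) (𝓝 0) (𝓝 ((A *ᵥ y) i)) :=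
        Continuous.tendsto' (by fun_prop) _ _ (by simp)
      exact ((hcont.mono_left nhdsWithin_le_nhds).eventually_lt_const (not_le.1 hi)).mono
        fun _ => le_of_lt
  obtain ⟨t, hstep, ht⟩ := (feasible_step.and self_mem_nhdsWithin).exists
  have hle := hmin _ hstep
  rw [dotProduct_add, dotProduct_smul, le_add_iff_nonneg_right] at hle
  exact nonneg_of_mul_nonneg_right hle ht

lemma mem_Psi_iff_exists_isOptimalityCertificate :
    y ∈ Psi d A T x z ↔ ∃ I, IsOptimalityCertificate d A I ∧
      A *ᵥ y ≤ T *ᵥ x + z ∧ ∀ i ∈ I, (T *ᵥ x + z) i ≤ (A *ᵥ y) i := by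
  refine ⟨fun hy => ⟨_, isOptimalityCertificate_active hy, hy.1, fun _ => id⟩, ?_⟩
  rintro ⟨I, hcert, hfeas, htight⟩
  refine ⟨hfeas, fun y' hy' => sub_nonneg.1 ?_⟩
  rw [← dotProduct_sub]
  refine hcert _ fun i hi => ?_
  rw [mulVec_sub]
  exact sub_nonpos.2 ((hy' i).trans (htight i hi))

lemma isClosed_setOfPred_exists_mem_Psi_dotProduct_le (q d : Fin m → ℝ)
    (A : Matrix (Fin s) (Fin m) ℝ) (T : Matrix (Fin s) (Fin n) ℝ) :
    IsClosed {p : ((Fin n → ℝ) × (Fin s → ℝ)) × ℝ |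
      ∃ y ∈ Psi d A T p.1.1 p.1.2, q ⬝ᵥ y ≤ p.2} := by
  have eq_iUnion : {p : ((Fin n → ℝ) × (Fin s → ℝ)) × ℝ |
      ∃ y ∈ Psi d A T p.1.1 p.1.2, q ⬝ᵥ y ≤ p.2} =
      ⋃ I ∈ {I | IsOptimalityCertificate d A I}, (fun p => (T *ᵥ p.1.1 + p.1.2, p.2)) ⁻¹'
        {p | ∃ y, (A *ᵥ y ≤ p.1 ∧ ∀ i ∈ I, p.1 i ≤ (A *ᵥ y) i) ∧ q ⬝ᵥ y ≤ p.2} := by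
    ext p
    simp only [mem_Psi_iff_exists_isOptimalityCertificate, mem_iUnion, mem_preimage, mem_ofPred_eq,
      exists_prop]
    grind
  rw [eq_iUnion]
  exact (toFinite _).isClosed_biUnion fun I _ =>
    (isClosed_setOfPred_exists_tight_dotProduct_le q A I).preimage (by fun_prop)

lemma sInf_image_Psi_le_coe_iff {t : ℝ} :
    sInf ((fun y => ((q ⬝ᵥ y : ℝ) : EReal)) '' Psi d A T x z) ≤ t ↔
      ∃ y ∈ Psi d A T x z, q ⬝ᵥ y ≤ t := by
  constructor
  · intro hle
    have hclosed : IsClosed {t : ℝ | ∃ y ∈ Psi d A T x z, q ⬝ᵥ y ≤ t} :=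
      (isClosed_setOfPred_exists_mem_Psi_dotProduct_le q d A T).preimage
        (Continuous.prodMk_right (x, z))
    have above : Ioi t ⊆ {t : ℝ | ∃ y ∈ Psi d A T x z, q ⬝ᵥ y ≤ t} := by
      intro t' ht'
      obtain ⟨_, ⟨y, hy, rfl⟩, hlt⟩ :=
        sInf_lt_iff.1 (hle.trans_lt (EReal.coe_lt_coe_iff.2 ht'))
      exact ⟨y, hy, (EReal.coe_lt_coe_iff.1 hlt).le⟩
    exact hclosed.closure_subset_iff.2 above (by simp)
  · rintro ⟨y, hy, hle⟩
    exact (sInf_le (mem_image_of_mem _ hy)).trans (EReal.coe_le_coe_iff.2 hle)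

lemma fE_le_coe_iff {β : ℝ} :
    fE c q d A T x z ≤ β ↔ ∃ y ∈ Psi d A T x z, q ⬝ᵥ y ≤ β - c ⬝ᵥ x := by
  rw [← sInf_image_Psi_le_coe_iff, EReal.coe_sub, EReal.le_sub_iff_add_le (by simp) (by simp),
    add_comm, fE]

theorem isClosed_setOfPred_fE_le (c : Fin n → ℝ) (q d : Fin m → ℝ) (A : Matrix (Fin s) (Fin m) ℝ)
    (T : Matrix (Fin s) (Fin n) ℝ) (β : ℝ) :
    IsClosed {p : (Fin n → ℝ) × (Fin s → ℝ) | fE c q d A T p.1 p.2 ≤ β} := by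
  simp only [fE_le_coe_iff]
  exact (isClosed_setOfPred_exists_mem_Psi_dotProduct_le q d A T).preimage
    (f := fun p => (p, β - c ⬝ᵥ p.1)) (by fun_prop)

end LowerLevel

lemma upperSemicontinuous_measure_of_isClosed {Ω : Type*} [MeasurableSpace Ω] [TopologicalSpace Ω]
    [OpensMeasurableSpace Ω] [HasOuterApproxClosed Ω] {F : Set Ω} (hF : IsClosed F) :
    UpperSemicontinuous fun μ : ProbabilityMeasure Ω => (μ : Measure Ω) F :=
  upperSemicontinuous_iff_limsup_le.2 fun _ =>
    ProbabilityMeasure.limsup_measure_closed_le_of_tendsto tendsto_id hF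

theorem upperSemicontinuous_measure_section {E Z : Type*} [TopologicalSpace E]
    [TopologicalSpace Z] [TopologicalSpace.PseudoMetrizableSpace E]
    [TopologicalSpace.PseudoMetrizableSpace Z] [SecondCountableTopology E]
    [SecondCountableTopology Z] [MeasurableSpace Z] [OpensMeasurableSpace Z]
    {F : Set (E × Z)} (hF : IsClosed F) :
    UpperSemicontinuous fun p : E × ProbabilityMeasure Z =>
      (p.2 : Measure Z) (Prod.mk p.1 ⁻¹' F) := by
  borelize E
  have diracProd_apply (p : E × ProbabilityMeasure Z) :
      ((diracProba p.1).prod p.2 : Measure (E × Z)) F = (p.2 : Measure Z) (Prod.mk p.1 ⁻¹' F) := by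
    rw [ProbabilityMeasure.toMeasure_prod, diracProba, ProbabilityMeasure.coe_mk,
      Measure.dirac_prod, Measure.map_apply measurable_prodMk_left hF.measurableSet]
  have diracProd_continuous :
      Continuous fun p : E × ProbabilityMeasure Z => (diracProba p.1).prod p.2 :=
    ProbabilityMeasure.continuous_prod.comp (continuous_diracProba.prodMap continuous_id)
  simpa only [Function.comp_def, diracProd_apply] using
    (upperSemicontinuous_measure_of_isClosed hF).comp diracProd_continuous

lemma IsPolyhedron.isClosed {n : ℕ} {X : Set (Fin n → ℝ)} (hX : IsPolyhedron X) : IsClosed X := by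
  obtain ⟨k, B, b, rfl⟩ := hX
  exact isClosed_le (by fun_prop) continuous_const

theorem C1_closed_wrt_weak_convergence_general {n m s : ℕ} (c : Fin n → ℝ) (q d : Fin m → ℝ)
    (A : Matrix (Fin s) (Fin m) ℝ) (T : Matrix (Fin s) (Fin n) ℝ) {X : Set (Fin n → ℝ)}
    (hX : IsClosed X) (ν : Measure ℝ) :
    IsClosed {p : (Fin n → ℝ) × ProbabilityMeasure (Fin s → ℝ) | p.1 ∈ C1 c q d A T X ν p.2} := by
  have feasible_closed (β : ℝ) : IsClosed {p : (Fin n → ℝ) × ProbabilityMeasure (Fin s → ℝ) |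
      ν (Iic β) ≤ (p.2 : Measure (Fin s → ℝ)) {z | fE c q d A T p.1 z ≤ β}} :=
    (upperSemicontinuous_measure_section (isClosed_setOfPred_fE_le c q d A T β)).isClosed_preimage _
  simp only [C1, mem_ofPred_eq]
  rw [ofPred_and, ofPred_forall]
  exact (hX.preimage continuous_fst).inter (isClosed_iInter feasible_closed)

theorem C1_closed_wrt_weak_convergence {n m s : ℕ}
    (c : Fin n → ℝ) (q d : Fin m → ℝ)
    (A : Matrix (Fin s) (Fin m) ℝ) (T : Matrix (Fin s) (Fin n) ℝ)
    (hdom : (domf c q d A T).Nonempty) (hP : Pfeas A T = Set.univ)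
    (X : Set (Fin n → ℝ)) (hXpoly : IsPolyhedron X) (hXne : X.Nonempty)
    (ν : Measure ℝ) [IsProbabilityMeasure ν]
    (μl : ℕ → ProbabilityMeasure (Fin s → ℝ)) (μ : ProbabilityMeasure (Fin s → ℝ))
    (hμ : Filter.Tendsto μl Filter.atTop (𝓝 μ))
    (xl : ℕ → (Fin n → ℝ)) (x : Fin n → ℝ)
    (hx : Filter.Tendsto xl Filter.atTop (𝓝 x))
    (hfeas : ∀ l : ℕ, xl l ∈ C1 c q d A T X ν (μl l)) :
    x ∈ C1 c q d A T X ν μ :=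
  (C1_closed_wrt_weak_convergence_general c q d A T hXpoly.isClosed ν).mem_of_tendsto
    (hx.prodMk_nhds hμ) (Eventually.of_forall hfeas)

end
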